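/- Let m ≥ 2, let U ⊆ ℝ^m be open, let (f, ν) be a front on U with values in ℝ^{m+1}, and let p ∈ U be an A₂-point of f such that all singular points near p are A₂-points. If there is an open neighborhood V ⊆ U of p such that K^ext(X, Y)(q) ≥ 0 for every q ∈ V∖Σ and every pair of linearly independent X, Y ∈ ℝ^m, then every singular principal curvature of f at p is non-positive (every eigenvalue of the singular shape operator S at p is ≤ 0). -/

import Mathlib

open scoped Matrix

noncomputable section

/-- Partial derivative of a vector-valued map in the `k`-th coordinate direction. -/
def pd {m N : ℕ} (k : Fin m) (f : (Fin m → ℝ) → (Fin N → ℝ)) :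
    (Fin m → ℝ) → (Fin N → ℝ) :=
  fun q => fderiv ℝ f q (Pi.single k 1)

/-- The Jacobian function `λ(q) = det(∂_1 f, …, ∂_m f, ν)` of a frontal `(f, ν)`. -/
def lamb {m : ℕ} (f ν : (Fin m → ℝ) → (Fin (m + 1) → ℝ)) (q : Fin m → ℝ) : ℝ :=
  Matrix.det (Matrix.of (Fin.snoc (fun k : Fin m => pd k f q) (ν q)))

/-- `p` is an `A₂`-point of the frontal `(f, ν)`: a nondegenerate singular point at which
the null direction is transversal to the singular hypersurface, i.e. `dλ_p(η) ≠ 0` for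
(any) nonzero null vector `η`. -/
def IsA2 {m : ℕ} (f ν : (Fin m → ℝ) → (Fin (m + 1) → ℝ)) (p : Fin m → ℝ) : Prop :=
  lamb f ν p = 0 ∧ fderiv ℝ (lamb f ν) p ≠ 0 ∧
  ∀ X : Fin m → ℝ, X ≠ 0 → fderiv ℝ f p X = 0 → fderiv ℝ (lamb f ν) p X ≠ 0

/-- The extrinsic curvature `K^ext(X ∧ Y) = (II(X,X)II(Y,Y) − II(X,Y)²)/(I(X,X)I(Y,Y) − I(X,Y)²)`
of the plane spanned by `X, Y` at `q`, where `I(X,Y) = ⟨df X, df Y⟩` and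
`II(X,Y) = −⟨df X, dν Y⟩`. -/
def Kext {m : ℕ} (f ν : (Fin m → ℝ) → (Fin (m + 1) → ℝ)) (q : Fin m → ℝ)
    (X Y : Fin m → ℝ) : ℝ :=
  ((fderiv ℝ f q X ⬝ᵥ fderiv ℝ ν q X) * (fderiv ℝ f q Y ⬝ᵥ fderiv ℝ ν q Y)
      - (fderiv ℝ f q X ⬝ᵥ fderiv ℝ ν q Y) ^ 2) /
    ((fderiv ℝ f q X ⬝ᵥ fderiv ℝ f q X) * (fderiv ℝ f q Y ⬝ᵥ fderiv ℝ f q Y)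
      - (fderiv ℝ f q X ⬝ᵥ fderiv ℝ f q Y) ^ 2)


/-- `κ` is a singular principal curvature of the front `(f, ν)` at `p` with (singular
principal) eigendirection `X` tangent to the singular hypersurface: there are a smooth unit
conormal field `n` near `p` (orthogonal to `ν` and to the image of the tangent spaces of
the singular hypersurface), a nonzero null vector `η` at `p` and an `I`-orthonormal frame
`c` of the tangent space of the singular hypersurface at `p` such that `(c, η)` is
positively oriented, `(df(c), n, ν)` is positively oriented, and the singular shape
operator equation `D_X n = −sgn(dλ_p(η)) κ · df_p(X)` holds, where
`D_X n = ∂_X n − ⟨∂_X n, ν⟩ν` is the tangential part of `∂_X n`. -/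
def IsSingPrincCurvVec {m : ℕ} (f ν : (Fin m → ℝ) → (Fin (m + 1) → ℝ))
    (p : Fin m → ℝ) (κ : ℝ) (X : Fin m → ℝ) : Prop :=
  X ≠ 0 ∧ fderiv ℝ (lamb f ν) p X = 0 ∧
  ∃ (W : Set (Fin m → ℝ)) (n : (Fin m → ℝ) → (Fin (m + 1) → ℝ))
    (c : Fin m → (Fin m → ℝ)) (η : Fin m → ℝ),
    IsOpen W ∧ p ∈ W ∧ ContDiffOn ℝ (⊤ : ℕ∞) n W ∧
    (∀ q ∈ W, lamb f ν q = 0 →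
      n q ⬝ᵥ n q = 1 ∧ n q ⬝ᵥ ν q = 0 ∧
      ∀ Z : Fin m → ℝ, fderiv ℝ (lamb f ν) q Z = 0 → n q ⬝ᵥ fderiv ℝ f q Z = 0) ∧
    fderiv ℝ f p η = 0 ∧ η ≠ 0 ∧
    (∀ i : Fin m, (i : ℕ) < m - 1 → fderiv ℝ (lamb f ν) p (c i) = 0) ∧
    (∀ i j : Fin m, (i : ℕ) < m - 1 → (j : ℕ) < m - 1 →
      fderiv ℝ f p (c i) ⬝ᵥ fderiv ℝ f p (c j) = (if i = j then (1 : ℝ) else 0)) ∧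
    0 < Matrix.det (Matrix.of fun i : Fin m =>
        if (i : ℕ) < m - 1 then c i else η) ∧
    0 < Matrix.det (Matrix.of fun i : Fin (m + 1) =>
        if h : (i : ℕ) < m - 1 then fderiv ℝ f p (c ⟨(i : ℕ), by omega⟩)
        else if (i : ℕ) = m - 1 then n p else ν p) ∧
    fderiv ℝ n p X - (fderiv ℝ n p X ⬝ᵥ ν p) • ν p
      = (-(Real.sign (fderiv ℝ (lamb f ν) p η)) * κ) • fderiv ℝ f p X

/-!
Fix an `A₂`-point `p` with null vector `η`. The conormal `n` is orthogonal to the whole image of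
`df` along the singular set, and at `p` the symmetry of `II` makes `dν(η) = a n` with `a ≠ 0`
because `(f, ν)` is an immersion. Put `s = ⟨D²f(η, η), n⟩`; differentiating the determinant `λ`
shows that `s` has the sign of `dλ(η)`.

Off the singular set, `Kext ≥ 0` says that `II(X, X) II(η, η) - II(X, η)² ≥ 0`. Restrict this to the
line `p + tη`, which meets the singular set near `p` only at `t = 0`. Since `II(·, η)` vanishes at
`p` while `dII(η, η)(η) = -a s ≠ 0`, the first order term in `t` forces `II(X, X) = 0` at `p`. So
all of `II` vanishes at `p`, and the second order term gives `dII(X, X)(η) · dII(η, η)(η) ≥ 0`. For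
`X` tangent to the singular set, the Codazzi-type identity `dII(X, X)(η) = a b`, where
`b = ⟨D²f(X, X), n⟩`, turns this into `b s ≤ 0`. Finally
`b = -⟨D_X n, df X⟩ = sgn(dλ(η)) κ |df X|²`, so `κ ≤ 0`.
-/

open Filter Topology

section Calculus

variable {E ι : Type*} [NormedAddCommGroup E] [NormedSpace ℝ E] [Fintype ι]

theorem gram_det_pos_of_linearIndependent {u v : ι → ℝ} (h : LinearIndependent ℝ ![u, v]) :
    0 < (u ⬝ᵥ u) * (v ⬝ᵥ v) - (u ⬝ᵥ v) ^ 2 := by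
  have hpos := (Matrix.PosDef.mul_conjTranspose_self (Matrix.of ![u, v])
    (Matrix.vecMul_injective_iff.2 h)).det_pos
  rw [Matrix.det_fin_two] at hpos
  change 0 < (u ⬝ᵥ u) * (v ⬝ᵥ v) - (u ⬝ᵥ v) * (v ⬝ᵥ u) at hpos
  rwa [dotProduct_comm v u, ← sq] at hpos

/-- The dot product as a continuous bilinear form, through which it is differentiated. -/
def dotProductL (ι : Type*) [Fintype ι] : (ι → ℝ) →L[ℝ] (ι → ℝ) →L[ℝ] ℝ :=
  (dotProductBilin ℝ ℝ).toContinuousBilinearMap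

theorem hasStrictFDerivAt_dotProduct {a b : E → ι → ℝ} {a' b' : E →L[ℝ] ι → ℝ} {x : E}
    (ha : HasStrictFDerivAt a a' x) (hb : HasStrictFDerivAt b b' x) :
    HasStrictFDerivAt (fun y => a y ⬝ᵥ b y)
      ((dotProductL ι).precompR E (a x) b' + (dotProductL ι).precompL E a' (b x)) x :=
  (dotProductL ι).hasStrictFDerivAt_of_bilinear ha hb

theorem fderiv_dotProduct_apply {a b : E → ι → ℝ} {a' b' : E →L[ℝ] ι → ℝ} {x : E}
    (ha : HasStrictFDerivAt a a' x) (hb : HasStrictFDerivAt b b' x) (Z : E) :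
    fderiv ℝ (fun y => a y ⬝ᵥ b y) x Z = a x ⬝ᵥ b' Z + a' Z ⬝ᵥ b x := by
  rw [(hasStrictFDerivAt_dotProduct ha hb).hasFDerivAt.fderiv]
  rfl

theorem hasStrictFDerivAt_fderiv_apply {F : Type*} [NormedAddCommGroup F] [NormedSpace ℝ F]
    {g : E → F} {x : E} (hg : ContDiffAt ℝ 2 g x) (Z : E) :
    HasStrictFDerivAt (fun y => fderiv ℝ g y Z) ((fderiv ℝ (fderiv ℝ g) x).flip Z) x :=
  ((ContinuousLinearMap.apply ℝ F Z).hasStrictFDerivAt.comp x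
    ((hg.fderiv_right (m := 1) (by norm_num)).hasStrictFDerivAt one_ne_zero))

theorem apply_eq_zero_of_eq_zero_on_zeroSet [CompleteSpace E] {l G : E → ℝ}
    {l' G' : E →L[ℝ] ℝ} {p : E} (hl : HasStrictFDerivAt l l' p) (hG : HasStrictFDerivAt G G' p)
    (hlp : l p = 0) (hl' : l' ≠ 0) (hzero : ∀ᶠ q in 𝓝 p, l q = 0 → G q = 0)
    {X : E} (hX : l' X = 0) : G' X = 0 := by
  have hextr : IsLocalExtrOn G {x | l x = l p} p := by
    left
    filter_upwards [hzero.filter_mono nhdsWithin_le_nhds, self_mem_nhdsWithin] with q hq hlq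
    rw [hzero.self_of_nhds hlp, hq (hlq.trans hlp)]
  obtain ⟨a, b, hab, hmul⟩ := hextr.exists_multipliers_of_hasStrictFDerivAt_1d hl hG
  have hb : b ≠ 0 := by
    rintro rfl
    have ha : a = 0 := by simpa [hl'] using hmul
    exact hab (by rw [ha]; rfl)
  simpa [hX, hb] using DFunLike.congr_fun hmul X

theorem mul_deriv_eq_zero_of_disc_nonneg {A B C : ℝ → ℝ} {A' B' C' x : ℝ}
    (hA : HasDerivAt A A' x) (hB : HasDerivAt B B' x) (hC : HasDerivAt C C' x)
    (hBx : B x = 0) (hCx : C x = 0) (hdisc : ∀ᶠ t in 𝓝[≠] x, 0 ≤ A t * B t - C t ^ 2) :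
    A x * B' = 0 := by
  have hmin : IsLocalMin (fun t => A t * B t - C t ^ 2) x := by
    filter_upwards [eventually_nhdsWithin_iff.1 hdisc] with t ht
    rcases eq_or_ne t x with rfl | htx
    · exact le_rfl
    · simpa [hBx, hCx] using ht htx
  simpa [hBx, hCx] using hmin.hasDerivAt_eq_zero ((hA.mul hB).sub (hC.pow 2))

theorem deriv_mul_deriv_nonneg_of_disc_nonneg {A B C : ℝ → ℝ} {A' B' C' x : ℝ}
    (hA : HasDerivAt A A' x) (hB : HasDerivAt B B' x) (hC : HasDerivAt C C' x)
    (hAx : A x = 0) (hBx : B x = 0) (hCx : C x = 0)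
    (hdisc : ∀ᶠ t in 𝓝[≠] x, 0 ≤ A t * B t - C t ^ 2) : 0 ≤ A' * B' := by
  have hlim := ((hasDerivAt_iff_tendsto_slope.1 hA).mul (hasDerivAt_iff_tendsto_slope.1 hB)).sub
    ((hasDerivAt_iff_tendsto_slope.1 hC).pow 2)
  have hslope : 0 ≤ A' * B' - C' ^ 2 := by
    refine ge_of_tendsto hlim ?_
    filter_upwards [hdisc] with t ht
    have hscale : slope A x t * slope B x t - slope C x t ^ 2 =
        ((t - x)⁻¹) ^ 2 * (A t * B t - C t ^ 2) := by
      simp only [slope, vsub_eq_sub, hAx, hBx, hCx, sub_zero, smul_eq_mul]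
      ring
    rw [hscale]
    positivity
  linarith [sq_nonneg C']

end Calculus

section Determinant

variable {n : Type*} [Fintype n] [DecidableEq n]

/-- The determinant as a continuous multilinear function of the rows, through which it is
differentiated. -/
def detRowContinuousMultilinear (n : Type*) [Fintype n] [DecidableEq n] :
    ContinuousMultilinearMap ℝ (fun _ : n => n → ℝ) ℝ where
  toMultilinearMap := (Matrix.detRowAlternating (n := n) (R := ℝ)).toMultilinearMap
  cont := Continuous.matrix_det continuous_id

theorem fderiv_det_apply_of_row_eq_zero {E : Type*} [NormedAddCommGroup E] [NormedSpace ℝ E]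
    {R : E → n → n → ℝ} {R' : n → E →L[ℝ] n → ℝ} {x : E} (hR : ∀ i, HasFDerivAt (R · i) (R' i) x)
    {k : n} (hk : R x k = 0) (Z : E) :
    fderiv ℝ (fun y => (Matrix.of (R y)).det) x Z =
      ((Matrix.of (R x)).updateRow k (R' k Z)).det := by
  have hderiv := ((detRowContinuousMultilinear n).hasFDerivAt (R x)).comp x (hasFDerivAt_pi.2 hR)
  have hsum : fderiv ℝ (fun y => (Matrix.of (R y)).det) x Z =
      ∑ i, ((Matrix.of (R x)).updateRow i (R' i Z)).det := by
    refine (DFunLike.congr_fun hderiv.fderiv Z).trans ?_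
    simp only [ContinuousLinearMap.comp_apply, ContinuousMultilinearMap.linearDeriv_apply]
    rfl
  rw [hsum, Finset.sum_eq_single k _ (by simp)]
  intro i _ hik
  exact Matrix.det_eq_zero_of_row_eq_zero k fun j => by simp [Matrix.updateRow_ne hik.symm, hk]

theorem det_updateRow_of_mulVec_eq_single {R : Type*} [CommRing R] {M : Matrix n n R} {k : n}
    {v : n → R} (hv : M *ᵥ v = Pi.single k 1) (w : n → R) :
    (M.updateRow k w).det = (w ⬝ᵥ v) * M.det := by
  calc (M.updateRow k w).det = Mᵀ.cramer w ⬝ᵥ (M *ᵥ v) := by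
        rw [hv, dotProduct_single, mul_one, Matrix.cramer_transpose_apply]
    _ = (Mᵀ *ᵥ Mᵀ.cramer w) ⬝ᵥ v := by rw [Matrix.dotProduct_mulVec, Matrix.mulVec_transpose]
    _ = (w ⬝ᵥ v) * M.det := by
        rw [Matrix.mulVec_cramer, Matrix.det_transpose, smul_dotProduct, smul_eq_mul, mul_comm]

end Determinant

section Frontal

variable {E ι : Type*} [NormedAddCommGroup E] [NormedSpace ℝ E] [Fintype ι]

/-- `(f, ν)` is the germ at `q` of a `C²` frontal: `ν` is a unit field normal to `f`. The domain is
any normed space and the codimension is arbitrary. -/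
structure IsFrontalAt (f ν : E → ι → ℝ) (q : E) : Prop where
  contDiffAt : ContDiffAt ℝ 2 f q
  contDiffAt_normal : ContDiffAt ℝ 2 ν q
  normal_unit : ∀ᶠ x in 𝓝 q, ν x ⬝ᵥ ν x = 1
  fderiv_dotProduct_normal : ∀ᶠ x in 𝓝 q, ∀ Z, fderiv ℝ f x Z ⬝ᵥ ν x = 0

/-- `(f, ν)` is the germ at `q` of a front: `(f, ν)` is moreover an immersion at `q`. -/
structure IsFrontAt (f ν : E → ι → ℝ) (q : E) : Prop extends IsFrontalAt f ν q where
  eq_zero_of_fderiv_eq_zero : ∀ X, fderiv ℝ f q X = 0 → fderiv ℝ ν q X = 0 → X = 0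

/-- The second fundamental form `II(X, Y) = −⟨df X, dν Y⟩` at `q`. -/
def secondForm (f ν : E → ι → ℝ) (X Y q : E) : ℝ :=
  -(fderiv ℝ f q X ⬝ᵥ fderiv ℝ ν q Y)

variable {f ν : E → ι → ℝ} {q : E}

theorem IsFrontalAt.eventually (h : IsFrontalAt f ν q) : ∀ᶠ x in 𝓝 q, IsFrontalAt f ν x := by
  filter_upwards [h.contDiffAt.eventually (by simp), h.contDiffAt_normal.eventually (by simp),
    h.normal_unit.eventually_nhds, h.fderiv_dotProduct_normal.eventually_nhds]
    with x hf hν hunit htan using ⟨hf, hν, hunit, htan⟩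

theorem IsFrontalAt.hasStrictFDerivAt_normal (h : IsFrontalAt f ν q) :
    HasStrictFDerivAt ν (fderiv ℝ ν q) q :=
  h.contDiffAt_normal.hasStrictFDerivAt two_ne_zero

theorem IsFrontalAt.normal_dotProduct_fderiv_normal (h : IsFrontalAt f ν q) (Z : E) :
    ν q ⬝ᵥ fderiv ℝ ν q Z = 0 := by
  have hderiv := fderiv_dotProduct_apply h.hasStrictFDerivAt_normal h.hasStrictFDerivAt_normal Z
  rw [EventuallyEq.fderiv_eq h.normal_unit, dotProduct_comm (fderiv ℝ ν q Z)] at hderiv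
  simpa [← two_mul] using hderiv.symm

theorem IsFrontalAt.secondForm_eq (h : IsFrontalAt f ν q) (X Y : E) :
    secondForm f ν X Y q = fderiv ℝ (fderiv ℝ f) q Y X ⬝ᵥ ν q := by
  have hderiv := fderiv_dotProduct_apply (hasStrictFDerivAt_fderiv_apply h.contDiffAt X)
    h.hasStrictFDerivAt_normal Y
  have htan : (fun x => fderiv ℝ f x X ⬝ᵥ ν x) =ᶠ[𝓝 q] fun _ => 0 := by
    filter_upwards [h.fderiv_dotProduct_normal] with x hx using hx X
  rw [htan.fderiv_eq] at hderiv
  simp only [fderiv_fun_const, Pi.zero_apply, _root_.zero_apply,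
    ContinuousLinearMap.flip_apply] at hderiv
  unfold secondForm
  linarith

theorem fderiv_fderiv_comm {g : E → ι → ℝ} (hg : ContDiffAt ℝ 2 g q) (X Y : E) :
    fderiv ℝ (fderiv ℝ g) q X Y = fderiv ℝ (fderiv ℝ g) q Y X :=
  hg.isSymmSndFDerivAt (by simp) X Y

theorem IsFrontalAt.secondForm_comm (h : IsFrontalAt f ν q) (X Y : E) :
    secondForm f ν X Y q = secondForm f ν Y X q := by
  rw [h.secondForm_eq, h.secondForm_eq, fderiv_fderiv_comm h.contDiffAt]

theorem IsFrontalAt.differentiableAt_secondForm (h : IsFrontalAt f ν q) (X Y : E) :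
    DifferentiableAt ℝ (secondForm f ν X Y) q :=
  (hasStrictFDerivAt_dotProduct (hasStrictFDerivAt_fderiv_apply h.contDiffAt X)
    (hasStrictFDerivAt_fderiv_apply h.contDiffAt_normal Y)).differentiableAt.neg

theorem IsFrontalAt.fderiv_secondForm_apply (h : IsFrontalAt f ν q) (X Y Z : E) :
    fderiv ℝ (secondForm f ν X Y) q Z =
      -(fderiv ℝ f q X ⬝ᵥ fderiv ℝ (fderiv ℝ ν) q Z Y +
        fderiv ℝ (fderiv ℝ f) q Z X ⬝ᵥ fderiv ℝ ν q Y) := by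
  have hderiv := fderiv_dotProduct_apply (hasStrictFDerivAt_fderiv_apply h.contDiffAt X)
    (hasStrictFDerivAt_fderiv_apply h.contDiffAt_normal Y) Z
  unfold secondForm
  rw [fderiv_fun_neg, _root_.neg_apply, hderiv]
  rfl

/- Differentiating the symmetry `II(X, η) = II(η, X)` along `X` removes the second derivatives
of `ν`. -/
theorem IsFrontalAt.fderiv_secondForm_self_of_null (h : IsFrontalAt f ν q) {η : E}
    (hη : fderiv ℝ f q η = 0) (X : E) :
    fderiv ℝ (secondForm f ν X X) q η =
      fderiv ℝ (fderiv ℝ f) q X X ⬝ᵥ fderiv ℝ ν q η -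
        2 * (fderiv ℝ (fderiv ℝ f) q X η ⬝ᵥ fderiv ℝ ν q X) := by
  have hcomm : secondForm f ν X η =ᶠ[𝓝 q] secondForm f ν η X :=
    h.eventually.mono fun x hx => hx.secondForm_comm X η
  have hcodazzi := DFunLike.congr_fun (hcomm.fderiv_eq (𝕜 := ℝ)) X
  rw [h.fderiv_secondForm_apply, h.fderiv_secondForm_apply, hη, zero_dotProduct] at hcodazzi
  rw [h.fderiv_secondForm_apply, fderiv_fderiv_comm h.contDiffAt η X,
    fderiv_fderiv_comm h.contDiffAt_normal η X]
  linarith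

end Frontal

section Jacobian

variable {m : ℕ} {f ν : (Fin m → ℝ) → Fin (m + 1) → ℝ} {p q : Fin m → ℝ}

/-- The rows `df_q(C₁), …, df_q(C_m), ν(q)` attached to a frame `C` of `ℝ^m`; the standard frame
gives the matrix whose determinant is `λ`. -/
def frameRows (f ν : (Fin m → ℝ) → Fin (m + 1) → ℝ) (C : Fin m → Fin m → ℝ) (q : Fin m → ℝ) :
    Fin (m + 1) → Fin (m + 1) → ℝ :=
  Fin.snoc (fun i => fderiv ℝ f q (C i)) (ν q)

theorem fderiv_eq_sum_smul_pd {N : ℕ} (f : (Fin m → ℝ) → Fin N → ℝ) (q Z : Fin m → ℝ) :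
    fderiv ℝ f q Z = ∑ k, Z k • pd k f q := by
  conv_lhs => rw [pi_eq_sum_univ' Z]
  simp only [map_sum, map_smul, pd]

theorem IsFrontAt.of_contDiffOn {U : Set (Fin m → ℝ)} (hU : U ∈ 𝓝 p)
    (hf : ContDiffOn ℝ 2 f U) (hν : ContDiffOn ℝ 2 ν U) (hunit : ∀ q ∈ U, ν q ⬝ᵥ ν q = 1)
    (htan : ∀ q ∈ U, ∀ k, pd k f q ⬝ᵥ ν q = 0)
    (hfront : ∀ X, fderiv ℝ f p X = 0 → fderiv ℝ ν p X = 0 → X = 0) : IsFrontAt f ν p where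
  contDiffAt := hf.contDiffAt hU
  contDiffAt_normal := hν.contDiffAt hU
  normal_unit := eventually_of_mem hU hunit
  fderiv_dotProduct_normal := by
    filter_upwards [hU] with q hq Z
    simp [fderiv_eq_sum_smul_pd f q Z, sum_dotProduct, htan q hq]
  eq_zero_of_fderiv_eq_zero := hfront

theorem snoc_vecMul_jacobian (f ν : (Fin m → ℝ) → Fin (m + 1) → ℝ) (q Z : Fin m → ℝ) (s : ℝ) :
    (Fin.snoc Z s : Fin (m + 1) → ℝ) ᵥ*
      Matrix.of (Fin.snoc (fun k : Fin m => pd k f q) (ν q)) = fderiv ℝ f q Z + s • ν q := by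
  ext j
  simp [Matrix.vecMul, dotProduct, Fin.sum_univ_castSucc, fderiv_eq_sum_smul_pd f q Z]

theorem eq_zero_of_fderiv_eq_zero_of_lamb_ne_zero (hq : lamb f ν q ≠ 0) {Z : Fin m → ℝ}
    (hZ : fderiv ℝ f q Z = 0) : Z = 0 := by
  have hsnoc := Matrix.eq_zero_of_vecMul_eq_zero hq
    ((snoc_vecMul_jacobian f ν q Z 0).trans (by simp [hZ]))
  ext i
  simpa using congrFun hsnoc i.castSucc

theorem IsFrontalAt.exists_null_of_lamb_eq_zero (h : IsFrontalAt f ν q) (hq : lamb f ν q = 0) :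
    ∃ η ≠ 0, fderiv ℝ f q η = 0 := by
  obtain ⟨v, hv0, hv⟩ := Matrix.exists_vecMul_eq_zero_iff.2 hq
  induction v using Fin.snocCases with
  | snoc η s =>
  rw [snoc_vecMul_jacobian] at hv
  have hs : s = 0 := by
    simpa [h.fderiv_dotProduct_normal.self_of_nhds η, h.normal_unit.self_of_nhds] using
      congrArg (· ⬝ᵥ ν q) hv
  subst hs
  refine ⟨η, ?_, by simpa using hv⟩
  rintro rfl
  exact hv0 (by ext i; refine Fin.lastCases ?_ (fun j => ?_) i <;> simp)

theorem det_frameRows (f ν : (Fin m → ℝ) → Fin (m + 1) → ℝ) (C : Fin m → Fin m → ℝ)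
    (q : Fin m → ℝ) :
    (Matrix.of (frameRows f ν C q)).det = (Matrix.of C).det * lamb f ν q := by
  let Q : Matrix (Fin (m + 1)) (Fin (m + 1)) ℝ :=
    Matrix.of (Fin.snoc (fun i : Fin m => (Fin.snoc (C i) 0 : Fin (m + 1) → ℝ))
      (Fin.snoc (0 : Fin m → ℝ) 1 : Fin (m + 1) → ℝ))
  have hQ : Q.det = (Matrix.of C).det := by
    have hsub : Q.submatrix (Fin.last m).succAbove (Fin.last m).succAbove = Matrix.of C := by
      ext i j
      simp [Q]
    rw [Matrix.det_succ_row Q (Fin.last m), Fin.sum_univ_castSucc, hsub]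
    simp [Q]
  have hlast : Q (Fin.last m) = Fin.snoc (0 : Fin m → ℝ) 1 := by ext j; simp [Q]
  have hcastSucc (i : Fin m) : Q i.castSucc = Fin.snoc (C i) 0 := by ext j; simp [Q]
  rw [← hQ, lamb, ← Matrix.det_mul]
  congr 1
  ext i : 1
  rw [Matrix.mul_apply_eq_vecMul]
  refine Fin.lastCases ?_ (fun i => ?_) i
  · rw [hlast, snoc_vecMul_jacobian]
    simp [frameRows]
  · rw [hcastSucc, snoc_vecMul_jacobian]
    simp [frameRows]

theorem IsFrontalAt.contDiffAt_lamb (h : IsFrontalAt f ν q) : ContDiffAt ℝ 1 (lamb f ν) q := by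
  refine (detRowContinuousMultilinear (Fin (m + 1))).contDiff.contDiffAt.comp q
    (f := fun x => (Fin.snoc (fun k => pd k f x) (ν x) : Fin (m + 1) → Fin (m + 1) → ℝ))
    (contDiffAt_pi.2 fun i => ?_)
  refine Fin.lastCases ?_ (fun k => ?_) i
  · simpa using h.contDiffAt_normal.of_le one_le_two
  · simpa [pd] using (h.contDiffAt.fderiv_right (m := 1) (by norm_num)).clm_apply contDiffAt_const

theorem IsFrontalAt.hasStrictFDerivAt_lamb (h : IsFrontalAt f ν q) :
    HasStrictFDerivAt (lamb f ν) (fderiv ℝ (lamb f ν) q) q :=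
  h.contDiffAt_lamb.hasStrictFDerivAt one_ne_zero

theorem secondForm_disc_nonneg_of_Kext_nonneg (hq : lamb f ν q ≠ 0) {X Y : Fin m → ℝ}
    (hXY : LinearIndependent ℝ ![X, Y]) (hK : 0 ≤ Kext f ν q X Y) :
    0 ≤ secondForm f ν X X q * secondForm f ν Y Y q - secondForm f ν X Y q ^ 2 := by
  have hindep : LinearIndependent ℝ ![fderiv ℝ f q X, fderiv ℝ f q Y] :=
    LinearIndependent.pair_iff.2 fun s t hst => LinearIndependent.pair_iff.1 hXY s t
      (eq_zero_of_fderiv_eq_zero_of_lamb_ne_zero hq (by simpa using hst))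
  have hnum := (le_div_iff₀ (gram_det_pos_of_linearIndependent hindep)).1 hK
  simpa [secondForm] using hnum

end Jacobian

section A2

variable {m : ℕ} {f ν : (Fin m → ℝ) → Fin (m + 1) → ℝ} {p : Fin m → ℝ}

theorem IsA2.eventually_isA2 (h : IsA2 f ν p) (hf : IsFrontalAt f ν p) :
    ∀ᶠ q in 𝓝 p, lamb f ν q = 0 → IsA2 f ν q := by
  have hdlamb : ContinuousAt (fderiv ℝ (lamb f ν)) p :=
    (hf.contDiffAt_lamb.fderiv_right (m := 0) (by simp)).continuousAt
  have hdf : ContinuousAt (fderiv ℝ f) p :=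
    (hf.contDiffAt.fderiv_right (m := 0) (by norm_num)).continuousAt
  have hinj : Function.Injective ((fderiv ℝ f p).prod (fderiv ℝ (lamb f ν) p)) := by
    refine (injective_iff_map_eq_zero _).2 fun X hX => by_contra fun hX0 => ?_
    obtain ⟨hfX, hlX⟩ := Prod.mk.inj hX
    exact h.2.2 X hX0 hfX hlX
  have hprod : ContinuousAt (fun q => (fderiv ℝ f q).prod (fderiv ℝ (lamb f ν) q)) p :=
    (ContinuousLinearMap.prodₗᵢ ℝ).continuous.continuousAt.comp
      (f := fun q => (fderiv ℝ f q, fderiv ℝ (lamb f ν) q)) (hdf.prodMk hdlamb)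
  filter_upwards [hdlamb.eventually_ne h.2.1,
    hprod.eventually_mem (ContinuousLinearMap.isOpen_injective.mem_nhds hinj)]
    with q hne hinjq hq
  refine ⟨hq, hne, fun X hX0 hfX hlX => hX0 ?_⟩
  exact hinjq (by simp [hfX, hlX])

/-- The extrinsic curvature of all tangent planes at regular points near `p` is nonnegative. -/
def KextNonnegNear (f ν : (Fin m → ℝ) → Fin (m + 1) → ℝ) (p : Fin m → ℝ) : Prop :=
  ∀ᶠ q in 𝓝 p, lamb f ν q ≠ 0 → ∀ X Y : Fin m → ℝ,
    LinearIndependent ℝ ![X, Y] → 0 ≤ Kext f ν q X Y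

theorem KextNonnegNear.eventually_disc_nonneg (hK : KextNonnegNear f ν p)
    (hf : IsFrontalAt f ν p)
    {η X : Fin m → ℝ} (hη : fderiv ℝ (lamb f ν) p η ≠ 0) (hXη : LinearIndependent ℝ ![X, η]) :
    ∀ᶠ t in 𝓝[≠] (0 : ℝ), 0 ≤ secondForm f ν X X (p + t • η) * secondForm f ν η η (p + t • η) -
      secondForm f ν X η (p + t • η) ^ 2 := by
  have hregular : ∀ᶠ t in 𝓝[≠] (0 : ℝ), lamb f ν (p + t • η) ≠ 0 :=
    HasDerivAt.eventually_ne (hf.hasStrictFDerivAt_lamb.hasFDerivAt.hasLineDerivAt η) hη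
  have hline : Tendsto (fun t : ℝ => p + t • η) (𝓝[≠] 0) (𝓝 p) :=
    (Continuous.tendsto' (by fun_prop) 0 p (by simp)).mono_left nhdsWithin_le_nhds
  filter_upwards [hregular, hline.eventually hK] with t ht hKt
  exact secondForm_disc_nonneg_of_Kext_nonneg ht hXη (hKt ht X η hXη)

end A2

section Conormal

variable {m : ℕ} {f ν n : (Fin m → ℝ) → Fin (m + 1) → ℝ} {p : Fin m → ℝ}

/-- `n` is the germ at `p` of a `C¹` map which on the singular set is a unit field normal to `ν` and
to the image of the singular hypersurface. Nothing is asked of its values off the singular set. -/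
structure IsConormalAt (f ν n : (Fin m → ℝ) → Fin (m + 1) → ℝ) (p : Fin m → ℝ) : Prop where
  contDiffAt : ContDiffAt ℝ 1 n p
  conormal : ∀ᶠ q in 𝓝 p, lamb f ν q = 0 → n q ⬝ᵥ n q = 1 ∧ n q ⬝ᵥ ν q = 0 ∧
    ∀ Z, fderiv ℝ (lamb f ν) q Z = 0 → n q ⬝ᵥ fderiv ℝ f q Z = 0

theorem IsConormalAt.eventually_dotProduct_fderiv (hn : IsConormalAt f ν n p)
    (hf : IsFrontalAt f ν p) (hA2 : IsA2 f ν p) :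
    ∀ᶠ q in 𝓝 p, lamb f ν q = 0 → ∀ Z, n q ⬝ᵥ fderiv ℝ f q Z = 0 := by
  filter_upwards [hn.conormal, hf.eventually, hA2.eventually_isA2 hf] with q hnq hfq hA2q hq Z
  obtain ⟨η, hη0, hη⟩ := hfq.exists_null_of_lamb_eq_zero hq
  have hlη : fderiv ℝ (lamb f ν) q η ≠ 0 := (hA2q hq).2.2 η hη0 hη
  have htangent := (hnq hq).2.2
    (Z - (fderiv ℝ (lamb f ν) q Z / fderiv ℝ (lamb f ν) q η) • η) (by simp [hlη])
  simpa [hη] using htangent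

theorem IsConormalAt.fderiv_dotProduct_fderiv (hn : IsConormalAt f ν n p)
    (hf : IsFrontalAt f ν p) (hA2 : IsA2 f ν p) {X : Fin m → ℝ}
    (hX : fderiv ℝ (lamb f ν) p X = 0) (Z : Fin m → ℝ) :
    fderiv ℝ n p X ⬝ᵥ fderiv ℝ f p Z = -(n p ⬝ᵥ fderiv ℝ (fderiv ℝ f) p X Z) := by
  have hn' := hn.contDiffAt.hasStrictFDerivAt one_ne_zero
  have hf' := hasStrictFDerivAt_fderiv_apply hf.contDiffAt Z
  have hzero := apply_eq_zero_of_eq_zero_on_zeroSet hf.hasStrictFDerivAt_lamb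
    (hasStrictFDerivAt_dotProduct hn' hf') hA2.1 hA2.2.1
    ((hn.eventually_dotProduct_fderiv hf hA2).mono fun q h hq => h hq Z) hX
  exact eq_neg_of_add_eq_zero_right hzero

/-- The matrix with rows `df_p(C_i)` (`i ≠ k`) and `ν(p)`, with the conormal `n(p)` in place of the
row `df_p(C_k)`, which vanishes when `C_k` is a null vector. -/
def conormalMatrix (f ν n : (Fin m → ℝ) → Fin (m + 1) → ℝ) (C : Fin m → Fin m → ℝ) (k : Fin m)
    (p : Fin m → ℝ) : Matrix (Fin (m + 1)) (Fin (m + 1)) ℝ :=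
  (Matrix.of (frameRows f ν C p)).updateRow k.castSucc (n p)

theorem conormalMatrix_mulVec {C : Fin m → Fin m → ℝ} {k : Fin m} {w : Fin (m + 1) → ℝ}
    (hf : ∀ Z, fderiv ℝ f p Z ⬝ᵥ w = 0) (hν : ν p ⬝ᵥ w = 0) :
    conormalMatrix f ν n C k p *ᵥ w = Pi.single k.castSucc (n p ⬝ᵥ w) := by
  ext i
  rcases eq_or_ne i k.castSucc with rfl | hi
  · simp [conormalMatrix, Matrix.mulVec]
  · rw [Pi.single_eq_of_ne hi, Matrix.mulVec, conormalMatrix, Matrix.updateRow_ne hi]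
    refine Fin.lastCases ?_ (fun j => ?_) i
    · simpa [frameRows] using hν
    · simpa [frameRows] using hf (C j)

theorem IsConormalAt.conormalMatrix_mulVec_self (hn : IsConormalAt f ν n p)
    (hf : IsFrontalAt f ν p) (hA2 : IsA2 f ν p) (C : Fin m → Fin m → ℝ) (k : Fin m) :
    conormalMatrix f ν n C k p *ᵥ n p = Pi.single k.castSucc 1 := by
  obtain ⟨hunit, hnormal, -⟩ := hn.conormal.self_of_nhds hA2.1
  rw [conormalMatrix_mulVec (fun Z => ?_) (by rwa [dotProduct_comm]), hunit]
  rw [dotProduct_comm]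
  exact (hn.eventually_dotProduct_fderiv hf hA2).self_of_nhds hA2.1 Z

theorem IsFrontalAt.det_mul_fderiv_lamb (hf : IsFrontalAt f ν p) {C : Fin m → Fin m → ℝ}
    {k : Fin m} (hk : fderiv ℝ f p (C k) = 0) (Z : Fin m → ℝ) :
    (Matrix.of C).det * fderiv ℝ (lamb f ν) p Z =
      ((Matrix.of (frameRows f ν C p)).updateRow k.castSucc
        (fderiv ℝ (fderiv ℝ f) p Z (C k))).det := by
  let R' : Fin (m + 1) → (Fin m → ℝ) →L[ℝ] Fin (m + 1) → ℝ :=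
    Fin.snoc (fun i => (fderiv ℝ (fderiv ℝ f) p).flip (C i)) (fderiv ℝ ν p)
  have hR (i : Fin (m + 1)) : HasFDerivAt (frameRows f ν C · i) (R' i) p := by
    refine Fin.lastCases ?_ (fun j => ?_) i
    · simpa [frameRows, R'] using hf.hasStrictFDerivAt_normal.hasFDerivAt
    · simpa [frameRows, R'] using
        (hasStrictFDerivAt_fderiv_apply hf.contDiffAt (C j)).hasFDerivAt
  have hderiv := fderiv_det_apply_of_row_eq_zero (k := k.castSucc) hR (by simp [frameRows, hk]) Z
  simpa [det_frameRows, fderiv_const_mul hf.hasStrictFDerivAt_lamb.differentiableAt, R']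
    using hderiv

/-- A positively oriented frame `C` of `ℝ^m` whose `k`-th vector is null at `p`, such that putting
`n` in place of `df(C_k)` makes `(df(C_1), …, df(C_m), ν)` a positively oriented frame. -/
structure IsNullFrame (f ν n : (Fin m → ℝ) → Fin (m + 1) → ℝ) (C : Fin m → Fin m → ℝ) (k : Fin m)
    (p : Fin m → ℝ) : Prop where
  fderiv_null : fderiv ℝ f p (C k) = 0
  det_pos : 0 < (Matrix.of C).det
  det_conormalMatrix_pos : 0 < (conormalMatrix f ν n C k p).det

namespace IsNullFrame

variable {C : Fin m → Fin m → ℝ} {k : Fin m}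

theorem null_ne_zero (h : IsNullFrame f ν n C k p) : C k ≠ 0 := fun hk =>
  h.det_pos.ne' (Matrix.det_eq_zero_of_row_eq_zero k (congrFun hk))

theorem eq_smul_conormal (h : IsNullFrame f ν n C k p) (hf : IsFrontalAt f ν p)
    (hA2 : IsA2 f ν p) (hn : IsConormalAt f ν n p) {w : Fin (m + 1) → ℝ}
    (hw : ∀ Z, fderiv ℝ f p Z ⬝ᵥ w = 0) (hνw : ν p ⬝ᵥ w = 0) : w = (n p ⬝ᵥ w) • n p := by
  refine sub_eq_zero.1 (Matrix.eq_zero_of_mulVec_eq_zero h.det_conormalMatrix_pos.ne' ?_)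
  rw [Matrix.mulVec_sub, Matrix.mulVec_smul, hn.conormalMatrix_mulVec_self hf hA2,
    conormalMatrix_mulVec hw hνw, ← Pi.single_smul, smul_eq_mul, mul_one, sub_self]

theorem sign_fderiv_lamb_mul_pos (h : IsNullFrame f ν n C k p) (hf : IsFrontalAt f ν p)
    (hA2 : IsA2 f ν p) (hn : IsConormalAt f ν n p) :
    0 < Real.sign (fderiv ℝ (lamb f ν) p (C k)) *
      (fderiv ℝ (fderiv ℝ f) p (C k) (C k) ⬝ᵥ n p) := by
  have hdet := hf.det_mul_fderiv_lamb h.fderiv_null (C k)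
  rw [← Matrix.updateRow_idem, ← conormalMatrix, det_updateRow_of_mulVec_eq_single
    (hn.conormalMatrix_mulVec_self hf hA2 C k)] at hdet
  have hsign := Real.sign_mul_pos_of_ne_zero _ (hA2.2.2 _ h.null_ne_zero h.fderiv_null)
  refine pos_of_mul_pos_left (b := (conormalMatrix f ν n C k p).det) ?_
    h.det_conormalMatrix_pos.le
  rw [mul_assoc, ← hdet, mul_left_comm]
  exact mul_pos h.det_pos hsign

end IsNullFrame

end Conormal

section Curvature

variable {m : ℕ} {f ν n : (Fin m → ℝ) → Fin (m + 1) → ℝ} {p : Fin m → ℝ}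
  {C : Fin m → Fin m → ℝ} {k : Fin m}

namespace IsNullFrame

theorem secondForm_null (h : IsNullFrame f ν n C k p) (hf : IsFrontalAt f ν p) (Y : Fin m → ℝ) :
    secondForm f ν Y (C k) p = 0 := by
  rw [hf.secondForm_comm, secondForm, h.fderiv_null, zero_dotProduct, neg_zero]

theorem fderiv_normal_null (h : IsNullFrame f ν n C k p) (hf : IsFrontalAt f ν p)
    (hA2 : IsA2 f ν p) (hn : IsConormalAt f ν n p) :
    fderiv ℝ ν p (C k) = (n p ⬝ᵥ fderiv ℝ ν p (C k)) • n p :=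
  h.eq_smul_conormal hf hA2 hn (fun Z => neg_eq_zero.1 (h.secondForm_null hf Z))
    (hf.normal_dotProduct_fderiv_normal _)

theorem conormal_dotProduct_fderiv_normal_null_ne_zero (h : IsNullFrame f ν n C k p)
    (hf : IsFrontAt f ν p) (hA2 : IsA2 f ν p) (hn : IsConormalAt f ν n p) :
    n p ⬝ᵥ fderiv ℝ ν p (C k) ≠ 0 := fun hzero => by
  refine h.null_ne_zero (hf.eq_zero_of_fderiv_eq_zero _ h.fderiv_null ?_)
  rw [h.fderiv_normal_null hf.toIsFrontalAt hA2 hn, hzero, zero_smul]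

theorem fderiv_secondForm_null (h : IsNullFrame f ν n C k p) (hf : IsFrontalAt f ν p)
    (hA2 : IsA2 f ν p) (hn : IsConormalAt f ν n p) :
    fderiv ℝ (secondForm f ν (C k) (C k)) p (C k) =
      -((n p ⬝ᵥ fderiv ℝ ν p (C k)) * (fderiv ℝ (fderiv ℝ f) p (C k) (C k) ⬝ᵥ n p)) := by
  rw [hf.fderiv_secondForm_self_of_null h.fderiv_null]
  nth_rw 1 2 [h.fderiv_normal_null hf hA2 hn]
  rw [dotProduct_smul, smul_eq_mul]
  ring

/- `II(η, η)` and `II(Z, η)` vanish at `p` and `dII(η, η)(η) ≠ 0`, so along the line `p + tη` the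
discriminant `II(Z, Z) II(η, η) - II(Z, η)²` changes sign unless `II(Z, Z)` vanishes at `p`. -/
theorem secondForm_self_eq_zero (h : IsNullFrame f ν n C k p) (hf : IsFrontAt f ν p)
    (hA2 : IsA2 f ν p) (hn : IsConormalAt f ν n p) (hK : KextNonnegNear f ν p) (Z : Fin m → ℝ) :
    secondForm f ν Z Z p = 0 := by
  by_cases hindep : LinearIndependent ℝ ![Z, C k]
  · have hline (Y Y' : Fin m → ℝ) :=
      (hf.differentiableAt_secondForm Y Y').hasFDerivAt.hasLineDerivAt (C k)
    have hmul := mul_deriv_eq_zero_of_disc_nonneg (hline Z Z) (hline (C k) (C k))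
      (hline Z (C k)) (by simp [h.secondForm_null hf.toIsFrontalAt])
      (by simp [h.secondForm_null hf.toIsFrontalAt])
      (hK.eventually_disc_nonneg hf.toIsFrontalAt
        (hA2.2.2 _ h.null_ne_zero h.fderiv_null) hindep)
    have hderiv : fderiv ℝ (secondForm f ν (C k) (C k)) p (C k) ≠ 0 := by
      rw [h.fderiv_secondForm_null hf.toIsFrontalAt hA2 hn]
      exact neg_ne_zero.2 (mul_ne_zero (h.conormal_dotProduct_fderiv_normal_null_ne_zero hf hA2 hn)
        (right_ne_zero_of_mul (h.sign_fderiv_lamb_mul_pos hf.toIsFrontalAt hA2 hn).ne'))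
    simpa using (mul_eq_zero.1 hmul).resolve_right hderiv
  · rw [LinearIndependent.pair_symm_iff, LinearIndependent.pair_iff' h.null_ne_zero] at hindep
    push Not at hindep
    obtain ⟨t, rfl⟩ := hindep
    simp [secondForm, h.fderiv_null]

theorem fderiv_normal_eq_smul_conormal (h : IsNullFrame f ν n C k p) (hf : IsFrontAt f ν p)
    (hA2 : IsA2 f ν p) (hn : IsConormalAt f ν n p) (hK : KextNonnegNear f ν p) (X : Fin m → ℝ) :
    fderiv ℝ ν p X = (n p ⬝ᵥ fderiv ℝ ν p X) • n p := by
  refine h.eq_smul_conormal hf.toIsFrontalAt hA2 hn (fun Z => ?_)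
    (hf.normal_dotProduct_fderiv_normal X)
  have hself (Y : Fin m → ℝ) : fderiv ℝ f p Y ⬝ᵥ fderiv ℝ ν p Y = 0 :=
    neg_eq_zero.1 (h.secondForm_self_eq_zero hf hA2 hn hK Y)
  have hcomm : fderiv ℝ f p Z ⬝ᵥ fderiv ℝ ν p X = fderiv ℝ f p X ⬝ᵥ fderiv ℝ ν p Z :=
    neg_injective (hf.secondForm_comm Z X)
  have hpolar := hself (X + Z)
  simp only [map_add, add_dotProduct, dotProduct_add, hself] at hpolar
  linarith

theorem fderiv_secondForm_self (h : IsNullFrame f ν n C k p) (hf : IsFrontAt f ν p)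
    (hA2 : IsA2 f ν p) (hn : IsConormalAt f ν n p)
    (hK : KextNonnegNear f ν p) {X : Fin m → ℝ} (hX : fderiv ℝ (lamb f ν) p X = 0) :
    fderiv ℝ (secondForm f ν X X) p (C k) =
      (n p ⬝ᵥ fderiv ℝ ν p (C k)) * (fderiv ℝ (fderiv ℝ f) p X X ⬝ᵥ n p) := by
  have hmixed : fderiv ℝ (fderiv ℝ f) p X (C k) ⬝ᵥ n p = 0 := by
    simpa [h.fderiv_null, dotProduct_comm] using
      hn.fderiv_dotProduct_fderiv hf.toIsFrontalAt hA2 hX (C k)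
  rw [hf.fderiv_secondForm_self_of_null h.fderiv_null,
    h.fderiv_normal_eq_smul_conormal hf hA2 hn hK X, dotProduct_smul, hmixed]
  nth_rw 1 [h.fderiv_normal_null hf.toIsFrontalAt hA2 hn]
  simp only [dotProduct_smul, smul_eq_mul, mul_zero, sub_zero]

theorem sndFDeriv_dotProduct_conormal_mul_nonpos (h : IsNullFrame f ν n C k p)
    (hf : IsFrontAt f ν p) (hA2 : IsA2 f ν p) (hn : IsConormalAt f ν n p)
    (hK : KextNonnegNear f ν p) {X : Fin m → ℝ} (hX0 : X ≠ 0)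
    (hX : fderiv ℝ (lamb f ν) p X = 0) :
    (fderiv ℝ (fderiv ℝ f) p X X ⬝ᵥ n p) *
      (fderiv ℝ (fderiv ℝ f) p (C k) (C k) ⬝ᵥ n p) ≤ 0 := by
  have hlk := hA2.2.2 _ h.null_ne_zero h.fderiv_null
  have hindep : LinearIndependent ℝ ![X, C k] :=
    (LinearIndependent.pair_iff' hX0).2 fun t ht => hlk (by rw [← ht, map_smul, hX, smul_zero])
  have hline (Y Y' : Fin m → ℝ) :=
    (hf.differentiableAt_secondForm Y Y').hasFDerivAt.hasLineDerivAt (C k)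
  have hprod := deriv_mul_deriv_nonneg_of_disc_nonneg (hline X X) (hline (C k) (C k))
    (hline X (C k)) (by simpa using h.secondForm_self_eq_zero hf hA2 hn hK X)
    (by simp [h.secondForm_null hf.toIsFrontalAt])
    (by simp [h.secondForm_null hf.toIsFrontalAt])
    (hK.eventually_disc_nonneg hf.toIsFrontalAt hlk hindep)
  rw [h.fderiv_secondForm_self hf hA2 hn hK hX,
    h.fderiv_secondForm_null hf.toIsFrontalAt hA2 hn] at hprod
  have ha := sq_pos_of_ne_zero (h.conormal_dotProduct_fderiv_normal_null_ne_zero hf hA2 hn)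
  refine nonpos_of_mul_nonpos_right ?_ ha
  linarith

end IsNullFrame

theorem IsConormalAt.sndFDeriv_dotProduct_eq_of_shape (hn : IsConormalAt f ν n p)
    (hf : IsFrontalAt f ν p) (hA2 : IsA2 f ν p) {X : Fin m → ℝ}
    (hX : fderiv ℝ (lamb f ν) p X = 0) {c : ℝ}
    (hshape : fderiv ℝ n p X - (fderiv ℝ n p X ⬝ᵥ ν p) • ν p = c • fderiv ℝ f p X) :
    fderiv ℝ (fderiv ℝ f) p X X ⬝ᵥ n p = -c * (fderiv ℝ f p X ⬝ᵥ fderiv ℝ f p X) := by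
  have htan : ν p ⬝ᵥ fderiv ℝ f p X = 0 := by
    rw [dotProduct_comm, hf.fderiv_dotProduct_normal.self_of_nhds X]
  have hdot := congrArg (· ⬝ᵥ fderiv ℝ f p X) hshape
  simp only [sub_dotProduct, smul_dotProduct, smul_eq_mul, htan,
    hn.fderiv_dotProduct_fderiv hf hA2 hX X] at hdot
  rw [dotProduct_comm]
  linarith

theorem IsSingPrincCurvVec.exists_isNullFrame {κ : ℝ} {X : Fin m → ℝ}
    (h : IsSingPrincCurvVec f ν p κ X) :
    ∃ n C k, IsConormalAt f ν n p ∧ IsNullFrame f ν n C k p ∧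
      fderiv ℝ n p X - (fderiv ℝ n p X ⬝ᵥ ν p) • ν p =
        (-Real.sign (fderiv ℝ (lamb f ν) p (C k)) * κ) • fderiv ℝ f p X := by
  obtain ⟨hX0, -, W, n, c, η, hW, hpW, hn, hconormal, hη, -, -, -, hdet, hdet', hshape⟩ := h
  obtain ⟨i, -⟩ := Function.ne_iff.1 hX0
  have hm : 0 < m := i.pos
  let C : Fin m → Fin m → ℝ := fun i => if (i : ℕ) < m - 1 then c i else η
  let k : Fin m := ⟨m - 1, by omega⟩
  have hCk : C k = η := if_neg (lt_irrefl _)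
  refine ⟨n, C, k, ⟨(hn.contDiffAt (hW.mem_nhds hpW)).of_le (by simp), ?_⟩,
    ⟨by rwa [hCk], hdet, ?_⟩, by rwa [hCk]⟩
  · filter_upwards [hW.mem_nhds hpW] with q hq using hconormal q hq
  · convert hdet' using 2
    ext i : 1
    refine Fin.lastCases ?_ (fun j => ?_) i
    · simp [conormalMatrix, frameRows, Matrix.updateRow_ne (Fin.castSucc_ne_last k).symm,
        show ¬m < m - 1 by omega, show m ≠ m - 1 by omega]
    · rcases eq_or_ne j k with rfl | hjk
      · simp [conormalMatrix, k]
      · have hj : (j : ℕ) < m - 1 := by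
          have hne := Fin.val_ne_of_ne hjk
          simp only [k] at hne
          omega
        simp [conormalMatrix, frameRows, hjk, C, hj]

end Curvature

theorem singPrincCurv_nonpos_of_Kext_nonneg_general {m : ℕ}
    {f ν : (Fin m → ℝ) → Fin (m + 1) → ℝ} {p : Fin m → ℝ} (hf : IsFrontAt f ν p)
    (hA2 : IsA2 f ν p) (hK : KextNonnegNear f ν p)
    {κ : ℝ} {X : Fin m → ℝ} (h : IsSingPrincCurvVec f ν p κ X) : κ ≤ 0 := by
  have hX0 := h.1
  have hX := h.2.1
  obtain ⟨n, C, k, hn, hframe, hshape⟩ := h.exists_isNullFrame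
  have hI : 0 < fderiv ℝ f p X ⬝ᵥ fderiv ℝ f p X :=
    Matrix.dotProduct_self_star_pos_iff.2 fun hfX => hA2.2.2 X hX0 hfX hX
  have hbs := hframe.sndFDeriv_dotProduct_conormal_mul_nonpos hf hA2 hn hK hX0 hX
  have hsign := hframe.sign_fderiv_lamb_mul_pos hf.toIsFrontalAt hA2 hn
  rw [hn.sndFDeriv_dotProduct_eq_of_shape hf.toIsFrontalAt hA2 hX hshape] at hbs
  refine nonpos_of_mul_nonpos_left ?_ (mul_pos hsign hI)
  linarith

/-- If the extrinsic curvature of a front `(f, ν)` in `ℝ^{m+1}` is non-negative near an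
`A₂`-point `p` (off the singular set), then the singular principal curvatures at `p` are
all non-positive. -/
theorem singPrincCurv_nonpos_of_Kext_nonneg {m : ℕ} (hm : 2 ≤ m)
    (U : Set (Fin m → ℝ)) (hU : IsOpen U)
    (f ν : (Fin m → ℝ) → (Fin (m + 1) → ℝ))
    (hf : ContDiffOn ℝ (⊤ : ℕ∞) f U) (hν : ContDiffOn ℝ (⊤ : ℕ∞) ν U)
    (hν1 : ∀ q ∈ U, ν q ⬝ᵥ ν q = 1)
    (htang : ∀ q ∈ U, ∀ k : Fin m, pd k f q ⬝ᵥ ν q = 0)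
    (hfront : ∀ q ∈ U, ∀ X : Fin m → ℝ, fderiv ℝ f q X = 0 → fderiv ℝ ν q X = 0 → X = 0)
    (p : Fin m → ℝ) (hp : p ∈ U) (hA2 : IsA2 f ν p)
    (V₀ : Set (Fin m → ℝ)) (hV₀ : IsOpen V₀) (hpV₀ : p ∈ V₀)
    (hallA2 : ∀ q ∈ V₀ ∩ U, lamb f ν q = 0 → IsA2 f ν q)
    (V : Set (Fin m → ℝ)) (hV : IsOpen V) (hpV : p ∈ V) (hVU : V ⊆ U)
    (hnonneg : ∀ q ∈ V, lamb f ν q ≠ 0 → ∀ X Y : Fin m → ℝ,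
      LinearIndependent ℝ ![X, Y] → 0 ≤ Kext f ν q X Y) :
    ∀ (κ : ℝ) (X : Fin m → ℝ), IsSingPrincCurvVec f ν p κ X → κ ≤ 0 := by
  exact fun κ X => singPrincCurv_nonpos_of_Kext_nonneg_general
    (.of_contDiffOn (hU.mem_nhds hp) (hf.of_le ENat.LEInfty.out) (hν.of_le ENat.LEInfty.out)
      hν1 htang (hfront p hp)) hA2 (eventually_of_mem (hV.mem_nhds hpV) hnonneg)
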